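/- (Andô's inequality) Let T₁ and T₂ be commuting bounded linear operators on a complex Hilbert space with ‖T₁‖ ≤ 1 and ‖T₂‖ ≤ 1, and let p(z,w) be a polynomial in two variables with complex coefficients. Then ‖p(T₁,T₂)‖ ≤ sup_{|z| ≤ 1, |w| ≤ 1} |p(z,w)|. -/

import Mathlib

open Metric MvPolynomial

/-- For commuting operators `T₁, T₂`, the operator `p(T₁, T₂)` obtained by substituting
them into a two-variable polynomial `p`. -/
noncomputable def polyEvalPair {H : Type*} [NormedAddCommGroup H] [InnerProductSpace ℂ H]
    (p : MvPolynomial (Fin 2) ℂ) (T₁ T₂ : H →L[ℂ] H) : H →L[ℂ] H :=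
  ∑ m ∈ p.support, MvPolynomial.coeff m p • (T₁ ^ m 0 * T₂ ^ m 1)


lemma ando_parseval {G E : Type*} [AddCommGroup G] [Fintype G] [NormedAddCommGroup E]
    [InnerProductSpace ℂ E] (f : G → E) :
    ∑ χ : AddChar G ℂ, ‖∑ g, χ (-g) • f g‖ ^ 2 = (Fintype.card G : ℝ) * ∑ g, ‖f g‖ ^ 2 := by
  classical
  have key : ((∑ χ : AddChar G ℂ, ‖∑ g, χ (-g) • f g‖ ^ 2 : ℝ) : ℂ)
      = (((Fintype.card G : ℝ) * ∑ g, ‖f g‖ ^ 2 : ℝ) : ℂ) := by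
    push_cast
    have h1 : ∀ χ : AddChar G ℂ, ((‖∑ g, χ (-g) • f g‖ : ℝ) : ℂ) ^ 2
        = ∑ g, ∑ g', χ (g - g') * inner ℂ (f g) (f g') := by
      intro χ
      have := inner_self_eq_norm_sq_to_K (𝕜 := ℂ) (∑ g, χ (-g) • f g)
      rw [show ((‖∑ g, χ (-g) • f g‖ : ℝ) : ℂ) ^ 2
        = inner ℂ (∑ g, χ (-g) • f g) (∑ g, χ (-g) • f g) from this.symm]
      rw [sum_inner]
      refine Finset.sum_congr rfl fun g _ => ?_
      rw [inner_sum]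
      refine Finset.sum_congr rfl fun g' _ => ?_
      rw [inner_smul_left, inner_smul_right, ← mul_assoc, ← AddChar.map_neg_eq_conj, neg_neg,
        ← AddChar.map_add_eq_mul, sub_eq_add_neg]
    simp_rw [h1]
    rw [Finset.sum_comm, Finset.mul_sum]
    refine Finset.sum_congr rfl fun g _ => ?_
    rw [Finset.sum_comm]
    simp_rw [← Finset.sum_mul, AddChar.sum_apply_eq_ite]
    rw [Finset.sum_eq_single g]
    · simp only [sub_self, if_true]
      congr 1
      exact inner_self_eq_norm_sq_to_K (𝕜 := ℂ) (f g)
    · intro b _ hb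
      rw [if_neg (fun h => hb (sub_eq_zero.1 h).symm), zero_mul]
    · simp
  exact_mod_cast key

lemma ando_conv {G E : Type*} [AddCommGroup G] [Fintype G] [NormedAddCommGroup E]
    [InnerProductSpace ℂ E] (f : G → E) {ι : Type*} (s : Finset ι) (c : ι → ℂ) (k : ι → G)
    (S : ℝ) (hS : ∀ χ : AddChar G ℂ, ‖∑ i ∈ s, c i * χ (k i)‖ ≤ S) :
    ∑ g, ‖∑ i ∈ s, c i • f (g + k i)‖ ^ 2 ≤ S ^ 2 * ∑ g, ‖f g‖ ^ 2 := by
  have hc : (0 : ℝ) < Fintype.card G := by exact_mod_cast Fintype.card_pos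
  refine le_of_mul_le_mul_left ?_ hc
  rw [mul_left_comm, ← ando_parseval, ← ando_parseval, Finset.mul_sum]
  refine Finset.sum_le_sum fun χ _ => ?_
  have : ∑ g, χ (-g) • ∑ i ∈ s, c i • f (g + k i)
      = (∑ i ∈ s, c i * χ (k i)) • ∑ g, χ (-g) • f g := by
    rw [Finset.sum_smul]
    simp_rw [Finset.smul_sum]
    rw [Finset.sum_comm]
    refine Finset.sum_congr rfl fun i _ => ?_
    rw [← Equiv.sum_comp (Equiv.addRight (k i)) (fun g => (c i * χ (k i)) • χ (-g) • f g)]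
    refine Finset.sum_congr rfl fun g _ => ?_
    simp only [Equiv.coe_addRight, smul_smul]
    congr 1
    rw [mul_assoc, ← AddChar.map_add_eq_mul, mul_comm]
    congr 2
    abel
  rw [this, norm_smul, mul_pow]
  gcongr
  exact hS χ

lemma ando_defect {H : Type*} [NormedAddCommGroup H] [InnerProductSpace ℂ H] [CompleteSpace H]
    (T : H →L[ℂ] H) (hT : ‖T‖ ≤ 1) :
    ∃ D : H →L[ℂ] H, ∀ h, ‖T h‖ ^ 2 + ‖D h‖ ^ 2 = ‖h‖ ^ 2 := by
  have hpos : (0 : H →L[ℂ] H) ≤ 1 - star T * T := by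
    rw [sub_nonneg]
    rw [← CStarAlgebra.norm_le_one_iff_of_nonneg _ (star_mul_self_nonneg T),
      CStarRing.norm_star_mul_self]
    exact mul_le_one₀ hT (norm_nonneg _) hT
  obtain ⟨D, hD⟩ := CStarAlgebra.nonneg_iff_eq_star_mul_self.1 hpos
  refine ⟨D, fun h => ?_⟩
  have key : ∀ A : H →L[ℂ] H, ((‖A h‖ ^ 2 : ℝ) : ℂ) = inner ℂ h ((star A * A) h) := by
    intro A
    rw [mul_apply_eq_comp, ContinuousLinearMap.star_eq_adjoint,
      ContinuousLinearMap.adjoint_inner_right, inner_self_eq_norm_sq_to_K]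
    push_cast; rfl
  have h3 : ((‖h‖ ^ 2 : ℝ) : ℂ) = inner ℂ h h := by
    rw [inner_self_eq_norm_sq_to_K]; push_cast; rfl
  have : ((‖T h‖ ^ 2 + ‖D h‖ ^ 2 : ℝ) : ℂ) = ((‖h‖ ^ 2 : ℝ) : ℂ) := by
    rw [Complex.ofReal_add, key T, key D, ← hD, h3, ← inner_add_right]
    simp
  exact_mod_cast this

lemma ando_reflection {H E : Type*} [AddCommGroup H] [Module ℂ H]
    [NormedAddCommGroup E] [InnerProductSpace ℂ E] [CompleteSpace E] (α β : H →ₗ[ℂ] E)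
    (horth : ∀ h k, inner ℂ (α h) (β k) = 0) (hn : ∀ h, ‖α h‖ = ‖β h‖) :
    ∃ R : E →ₗ[ℂ] E, (∀ x, ‖R x‖ = ‖x‖) ∧ (∀ x, R (R x) = x) ∧ ∀ h, R (α h) = β h := by
  let M : Submodule ℂ E := (LinearMap.range (α + β)).topologicalClosure
  have hR1 : ∀ h, M.reflection (α h + β h) = α h + β h := fun h =>
    Submodule.reflection_mem_subspace_eq_self
      (Submodule.le_topologicalClosure _ ⟨h, rfl⟩)
  have hin : ∀ h k, inner ℂ (α h) (α k) = inner ℂ (β h) (β k) := by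
    intro h k
    rw [inner_eq_sum_norm_sq_div_four, inner_eq_sum_norm_sq_div_four]
    simp only [← map_add, ← map_sub, ← map_smul, hn]
  have hR2 : ∀ h, M.reflection (α h - β h) = -(α h - β h) := by
    intro h
    apply Submodule.reflection_mem_subspace_orthogonalComplement_eq_neg
    rw [Submodule.orthogonal_closure, Submodule.mem_orthogonal']
    rintro _ ⟨k, rfl⟩
    have h2 : inner ℂ (β h) (α k) = 0 := by
      rw [← inner_conj_symm, horth, map_zero]
    rw [LinearMap.add_apply, inner_sub_left, inner_add_right, inner_add_right, horth, h2, hin]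
    ring
  refine ⟨M.reflection.toLinearEquiv.toLinearMap, fun x => M.reflection.norm_map x,
    fun x => M.reflection_reflection x, fun h => ?_⟩
  change M.reflection (α h) = β h
  have e1 : α h = (2⁻¹ : ℂ) • ((α h + β h) + (α h - β h)) := by
    rw [add_add_sub_cancel, ← two_smul ℂ, smul_smul]; norm_num
  conv_lhs => rw [e1]
  rw [map_smul, map_add, hR1, hR2]
  rw [show α h + β h + -(α h - β h) = (2 : ℂ) • β h by rw [two_smul]; abel, smul_smul]
  norm_num

/-- The dilation step `(h, e) ↦ (T h, (D h, e₀.1), (e₀.2, e₁.1), …)`. -/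
noncomputable def andoW {H X : Type*} [NormedAddCommGroup H] [InnerProductSpace ℂ H]
    [NormedAddCommGroup X] [InnerProductSpace ℂ X] (T : H →ₗ[ℂ] H) (D : H →ₗ[ℂ] X) :
    (H × (ℕ → WithLp 2 (X × X))) →ₗ[ℂ] (H × (ℕ → WithLp 2 (X × X))) where
  toFun y := (T y.1, fun n => WithLp.toLp 2
    (Nat.casesOn n (D y.1) (fun m => (y.2 m).snd), (y.2 n).fst))
  map_add' x y := by
    ext n
    · simp
    · cases n <;> (simp; rfl)
  map_smul' c y := by
    ext n
    · simp
    · cases n <;> (simp; rfl)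

/-- Apply `R` to every block. -/
noncomputable def andoR {H E : Type*} [NormedAddCommGroup H] [InnerProductSpace ℂ H]
    [NormedAddCommGroup E] [InnerProductSpace ℂ E] (R : E →ₗ[ℂ] E) :
    (H × (ℕ → E)) →ₗ[ℂ] (H × (ℕ → E)) where
  toFun y := (y.1, fun n => R (y.2 n))
  map_add' x y := by
    ext n
    · simp
    · simp
  map_smul' c y := by
    ext n
    · simp
    · simp

/-- The (extended) square norm. -/
noncomputable def andoQ {H E : Type*} [NormedAddCommGroup H] [NormedAddCommGroup E]
    (y : H × (ℕ → E)) : ENNReal :=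
  ENNReal.ofReal (‖y.1‖ ^ 2) + ∑' n, ENNReal.ofReal (‖y.2 n‖ ^ 2)

lemma andoQ_R {H E : Type*} [NormedAddCommGroup H] [InnerProductSpace ℂ H]
    [NormedAddCommGroup E] [InnerProductSpace ℂ E] (R : E →ₗ[ℂ] E) (hR : ∀ x, ‖R x‖ = ‖x‖)
    (y : H × (ℕ → E)) : andoQ (andoR R y) = andoQ y := by
  simp [andoQ, andoR, hR]

lemma andoQ_W {H X : Type*} [NormedAddCommGroup H] [InnerProductSpace ℂ H]
    [NormedAddCommGroup X] [InnerProductSpace ℂ X] (T : H →ₗ[ℂ] H) (D : H →ₗ[ℂ] X)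
    (hD : ∀ h, ‖T h‖ ^ 2 + ‖D h‖ ^ 2 = ‖h‖ ^ 2)
    (y : H × (ℕ → WithLp 2 (X × X))) : andoQ (andoW T D y) = andoQ y := by
  unfold andoQ
  have hsq : ∀ x : WithLp 2 (X × X), ENNReal.ofReal (‖x‖ ^ 2)
      = ENNReal.ofReal (‖x.fst‖ ^ 2) + ENNReal.ofReal (‖x.snd‖ ^ 2) := by
    intro x
    rw [WithLp.prod_norm_sq_eq_of_L2, ENNReal.ofReal_add (by positivity) (by positivity)]
  simp_rw [hsq]
  rw [ENNReal.tsum_add, ENNReal.tsum_add,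
    tsum_eq_zero_add' (f := fun n => ENNReal.ofReal (‖((andoW T D y).2 n).fst‖ ^ 2))
      ENNReal.summable]
  simp only [andoW, LinearMap.coe_mk, AddHom.coe_mk, WithLp.toLp_fst, WithLp.toLp_snd]
  rw [← hD y.1, ENNReal.ofReal_add (by positivity) (by positivity)]
  change _ + (ENNReal.ofReal (‖D y.1‖ ^ 2) + _ + _) = _
  ring

/-- Existence of a commuting isometric dilation (on a space with extended square norm). -/
lemma ando_comm {H X : Type*} [NormedAddCommGroup H] [InnerProductSpace ℂ H]
    [NormedAddCommGroup X] [InnerProductSpace ℂ X] (T₁ T₂ : H →ₗ[ℂ] H) (D₁ D₂ : H →ₗ[ℂ] X)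
    (R : WithLp 2 (X × X) →ₗ[ℂ] WithLp 2 (X × X)) (hRR : ∀ x, R (R x) = x)
    (hc : ∀ h, T₁ (T₂ h) = T₂ (T₁ h))
    (hR : ∀ h, R (WithLp.toLp 2 (D₁ (T₂ h), D₂ h)) = WithLp.toLp 2 (D₂ (T₁ h), D₁ h))
    (y : H × (ℕ → WithLp 2 (X × X))) :
    andoR R (andoW T₁ D₁ (andoW T₂ D₂ (andoR R y)))
      = andoW T₂ D₂ (andoR R (andoR R (andoW T₁ D₁ y))) := by
  refine Prod.ext ?_ (funext fun n => ?_)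
  · simp [andoR, andoW, hc]
  · cases n with
    | zero => simp [andoR, andoW, hRR, hR]
    | succ m =>
      simp only [andoR, andoW, LinearMap.coe_mk, AddHom.coe_mk, hRR]
      exact hRR _

lemma ando_Qconv {G H E : Type*} [AddCommGroup G] [Fintype G] [NormedAddCommGroup H]
    [InnerProductSpace ℂ H] [NormedAddCommGroup E]
    [InnerProductSpace ℂ E] (f : G → H × (ℕ → E)) {ι : Type*} (s : Finset ι) (c : ι → ℂ)
    (k : ι → G)
    (S : ℝ) (hS : ∀ χ : AddChar G ℂ, ‖∑ i ∈ s, c i * χ (k i)‖ ≤ S) :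
    ∑ g, andoQ (∑ i ∈ s, c i • f (g + k i)) ≤ ENNReal.ofReal (S ^ 2) * ∑ g, andoQ (f g) := by
  unfold andoQ
  rw [Finset.sum_add_distrib, Finset.sum_add_distrib, mul_add]
  have key : ∀ {E' : Type _} [NormedAddCommGroup E'] [InnerProductSpace ℂ E'] (f' : G → E'),
      ∑ g, ENNReal.ofReal (‖∑ i ∈ s, c i • f' (g + k i)‖ ^ 2)
        ≤ ENNReal.ofReal (S ^ 2) * ∑ g, ENNReal.ofReal (‖f' g‖ ^ 2) := by
    intro E' _ _ f'
    rw [← ENNReal.ofReal_sum_of_nonneg (fun _ _ => by positivity),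
      ← ENNReal.ofReal_sum_of_nonneg (fun _ _ => by positivity),
      ← ENNReal.ofReal_mul (by positivity)]
    exact ENNReal.ofReal_le_ofReal (ando_conv f' s c k S hS)
  have key2 : ∀ {E' : Type _} [NormedAddCommGroup E'] [InnerProductSpace ℂ E'] (f' : G → E'),
      ∑ g, ENNReal.ofReal (‖∑ i ∈ s, c i • f' (g + k i)‖ ^ 2)
        ≤ ENNReal.ofReal (S ^ 2) * ∑ g, ENNReal.ofReal (‖f' g‖ ^ 2) := by
    intro E' _ _ f'
    rw [← ENNReal.ofReal_sum_of_nonneg (fun _ _ => by positivity),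
      ← ENNReal.ofReal_sum_of_nonneg (fun _ _ => by positivity),
      ← ENNReal.ofReal_mul (by positivity)]
    exact ENNReal.ofReal_le_ofReal (ando_conv f' s c k S hS)
  refine add_le_add ?_ ?_
  · simpa [Prod.fst_sum] using key (fun g => (f g).1)
  · rw [← Summable.tsum_finsetSum (fun _ _ => ENNReal.summable),
      ← Summable.tsum_finsetSum (fun _ _ => ENNReal.summable), ← ENNReal.tsum_mul_left]
    refine ENNReal.tsum_le_tsum fun n => ?_
    simpa [Prod.snd_sum, Finset.sum_apply] using key2 (fun g => (f g).2 n)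

lemma ando_bdd (p : MvPolynomial (Fin 2) ℂ) :
    BddAbove {x : ℝ | ∃ z w : ℂ, ‖z‖ ≤ 1 ∧ ‖w‖ ≤ 1 ∧ x = ‖MvPolynomial.eval ![z, w] p‖} := by
  refine ⟨∑ m ∈ p.support, ‖MvPolynomial.coeff m p‖, ?_⟩
  rintro _ ⟨z, w, hz, hw, rfl⟩
  rw [MvPolynomial.eval_eq']
  refine (norm_sum_le _ _).trans (Finset.sum_le_sum fun m _ => ?_)
  rw [norm_mul, Fin.prod_univ_two, norm_mul, norm_pow, norm_pow]
  refine mul_le_of_le_one_right (norm_nonneg _) ?_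
  exact mul_le_one₀ (pow_le_one₀ (norm_nonneg _) hz) (by positivity)
    (pow_le_one₀ (norm_nonneg _) hw)

lemma ando_torus {H E : Type*} [NormedAddCommGroup H] [InnerProductSpace ℂ H]
    [NormedAddCommGroup E] [InnerProductSpace ℂ E] (V₁ V₂ : (H × (ℕ → E)) →ₗ[ℂ] (H × (ℕ → E)))
    (hc : Commute V₁ V₂) (h₁ : ∀ y, andoQ (V₁ y) = andoQ y) (h₂ : ∀ y, andoQ (V₂ y) = andoQ y)
    (p : MvPolynomial (Fin 2) ℂ) (S : ℝ)
    (hS : ∀ z w : ℂ, ‖z‖ ≤ 1 → ‖w‖ ≤ 1 → ‖MvPolynomial.eval ![z, w] p‖ ≤ S)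
    (d : ℕ) (hd : ∀ m ∈ p.support, m 0 ≤ d ∧ m 1 ≤ d) (n : ℕ) (hn : 0 < n) (x : H × (ℕ → E)) :
    (n : ENNReal) ^ 2 * andoQ (∑ m ∈ p.support, MvPolynomial.coeff m p •
        (V₁ ^ m 0) ((V₂ ^ m 1) x))
      ≤ ENNReal.ofReal (S ^ 2) * (((n + d : ℕ) : ENNReal) ^ 2 * andoQ x) := by
  have p₁ : ∀ (i : ℕ) y, andoQ ((V₁ ^ i) y) = andoQ y := by
    intro i
    induction i with
    | zero => intro y; rfl
    | succ i ih => intro y; rw [pow_succ, Module.End.mul_apply, ih, h₁]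
  have p₂ : ∀ (i : ℕ) y, andoQ ((V₂ ^ i) y) = andoQ y := by
    intro i
    induction i with
    | zero => intro y; rfl
    | succ i ih => intro y; rw [pow_succ, Module.End.mul_apply, ih, h₂]
  let M : ℕ := n + d
  have : NeZero M := ⟨by omega⟩
  let f : ZMod M × ZMod M → H × (ℕ → E) := fun g => (V₁ ^ g.1.val) ((V₂ ^ g.2.val) x)
  let k : (Fin 2 →₀ ℕ) → ZMod M × ZMod M := fun m => ((m 0 : ZMod M), (m 1 : ZMod M))
  have hconv := ando_Qconv f p.support (fun m => MvPolynomial.coeff m p) k S (by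
    intro χ
    convert hS (χ (1, 0)) (χ (0, 1)) (by simp) (by simp) using 2
    rw [MvPolynomial.eval_eq']
    refine Finset.sum_congr rfl fun m _ => ?_
    rw [Fin.prod_univ_two]
    congr 1
    simp only [Matrix.cons_val_zero, Matrix.cons_val_one]
    rw [← AddChar.map_nsmul_eq_pow, ← AddChar.map_nsmul_eq_pow, ← AddChar.map_add_eq_mul]
    simp [k])
  have hR : ∑ g, andoQ (f g) = ((n + d : ℕ) : ENNReal) ^ 2 * andoQ x := by
    simp only [f, p₁, p₂, Finset.sum_const, Finset.card_univ, Fintype.card_prod, ZMod.card,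
      nsmul_eq_mul]
    push_cast [M]
    ring
  rw [hR] at hconv
  refine le_trans ?_ hconv
  set y := ∑ m ∈ p.support, MvPolynomial.coeff m p • (V₁ ^ m 0) ((V₂ ^ m 1) x) with hy
  let F := fun g => andoQ (∑ m ∈ p.support, MvPolynomial.coeff m p • f (g + k m))
  let c : ℕ × ℕ → ZMod M × ZMod M := fun q => ((q.1 : ZMod M), (q.2 : ZMod M))
  let B : Finset (ℕ × ℕ) := Finset.range n ×ˢ Finset.range n
  have hval : ∀ i : ℕ, i < n + d → ((i : ZMod M)).val = i := fun i hi =>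
    ZMod.val_natCast_of_lt hi
  have hinj : Set.InjOn c B := by
    rintro ⟨i, j⟩ hq ⟨i', j'⟩ hq' h
    simp only [B, Finset.coe_product, Finset.coe_range, Set.mem_prod, Set.mem_Iio] at hq hq'
    simp only [c, Prod.mk.injEq] at h
    have e1 := congrArg ZMod.val h.1
    have e2 := congrArg ZMod.val h.2
    rw [hval _ (by omega), hval _ (by omega)] at e1 e2
    rw [e1, e2]
  have hF : ∀ q ∈ B, F (c q) = andoQ y := by
    rintro ⟨i, j⟩ hq
    simp only [B, Finset.mem_product, Finset.mem_range] at hq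
    have : ∑ m ∈ p.support, MvPolynomial.coeff m p • f (c (i, j) + k m)
        = (V₁ ^ i) ((V₂ ^ j) y) := by
      rw [hy, map_sum, map_sum]
      refine Finset.sum_congr rfl fun m hm => ?_
      have := hd m hm
      rw [map_smul, map_smul]
      congr 1
      simp only [f, c, k, Prod.mk_add_mk, ← Nat.cast_add]
      rw [hval _ (by omega), hval _ (by omega)]
      simp only [← Module.End.mul_apply]
      congr 1
      rw [pow_add, pow_add, mul_assoc, ← mul_assoc (V₁ ^ m 0),
        (hc.pow_pow (m 0) j).eq, mul_assoc]
    simp only [F]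
    rw [this, p₁, p₂]
  calc (n : ENNReal) ^ 2 * andoQ y = ∑ q ∈ B, F (c q) := by
        rw [Finset.sum_congr rfl hF]
        simp [B, sq]
    _ = ∑ g ∈ B.image c, F g := (Finset.sum_image hinj).symm
    _ ≤ ∑ g, F g := Finset.sum_le_sum_of_subset (Finset.subset_univ _)

lemma ando_limit (a b : ℝ) (d : ℕ)
    (h : ∀ n : ℕ, 0 < n → (n : ℝ) * a ≤ ((n + d : ℕ) : ℝ) * b) : a ≤ b := by
  by_contra! hlt
  obtain ⟨n, hn⟩ := exists_nat_gt (d * b / (a - b))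
  rw [div_lt_iff₀ (sub_pos.2 hlt)] at hn
  have := h (n + 1) (Nat.succ_pos _)
  push_cast at this
  nlinarith

/-- **Andô's inequality.** If `T₁, T₂` are commuting contractions on a complex Hilbert
space and `p(z, w)` is a polynomial in two complex variables, then
`‖p(T₁, T₂)‖ ≤ sup_{|z| ≤ 1, |w| ≤ 1} |p(z, w)|`. -/
theorem ando_inequality
    {H : Type*} [NormedAddCommGroup H] [InnerProductSpace ℂ H] [CompleteSpace H]
    (T₁ T₂ : H →L[ℂ] H) (hcomm : Commute T₁ T₂) (h₁ : ‖T₁‖ ≤ 1) (h₂ : ‖T₂‖ ≤ 1)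
    (p : MvPolynomial (Fin 2) ℂ) :
    ‖polyEvalPair p T₁ T₂‖ ≤
      sSup {x : ℝ | ∃ z w : ℂ, ‖z‖ ≤ 1 ∧ ‖w‖ ≤ 1 ∧ x = ‖MvPolynomial.eval ![z, w] p‖} := by
  set S := sSup {x : ℝ | ∃ z w : ℂ, ‖z‖ ≤ 1 ∧ ‖w‖ ≤ 1 ∧ x = ‖MvPolynomial.eval ![z, w] p‖}
    with hSdef
  have hS : ∀ z w : ℂ, ‖z‖ ≤ 1 → ‖w‖ ≤ 1 → ‖MvPolynomial.eval ![z, w] p‖ ≤ S :=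
    fun z w hz hw => le_csSup (ando_bdd p) ⟨z, w, hz, hw, rfl⟩
  have hS0 : 0 ≤ S := (norm_nonneg _).trans (hS 0 0 (by simp) (by simp))
  obtain ⟨D₁, hD₁⟩ := ando_defect T₁ h₁
  obtain ⟨D₂, hD₂⟩ := ando_defect T₂ h₂
  have hcc : ∀ h, T₁ (T₂ h) = T₂ (T₁ h) := fun h => congrArg (fun A : H →L[ℂ] H => A h) hcomm.eq
  -- the two defect embeddings, with orthogonal ranges
  let J := (WithLp.linearEquiv 2 ℂ (H × H)).symm.toLinearMap
  let E₁ : H →ₗ[ℂ] WithLp 2 (H × H) := J ∘ₗ LinearMap.inl ℂ H H ∘ₗ D₁.toLinearMap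
  let E₂ : H →ₗ[ℂ] WithLp 2 (H × H) := J ∘ₗ LinearMap.inr ℂ H H ∘ₗ D₂.toLinearMap
  have hE₁ : ∀ h, E₁ h = WithLp.toLp 2 (D₁ h, 0) := fun h => rfl
  have hE₂ : ∀ h, E₂ h = WithLp.toLp 2 (0, D₂ h) := fun h => rfl
  have nE₁ : ∀ h, ‖E₁ h‖ ^ 2 = ‖D₁ h‖ ^ 2 := fun h => by
    rw [hE₁, WithLp.prod_norm_sq_eq_of_L2]; simp
  have nE₂ : ∀ h, ‖E₂ h‖ ^ 2 = ‖D₂ h‖ ^ 2 := fun h => by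
    rw [hE₂, WithLp.prod_norm_sq_eq_of_L2]; simp
  let J' := (WithLp.linearEquiv 2 ℂ (WithLp 2 (H × H) × WithLp 2 (H × H))).symm.toLinearMap
  let α : H →ₗ[ℂ] WithLp 2 (WithLp 2 (H × H) × WithLp 2 (H × H)) :=
    J' ∘ₗ (E₁ ∘ₗ T₂.toLinearMap).prod E₂
  let β : H →ₗ[ℂ] WithLp 2 (WithLp 2 (H × H) × WithLp 2 (H × H)) :=
    J' ∘ₗ (E₂ ∘ₗ T₁.toLinearMap).prod E₁
  have hα : ∀ h, α h = WithLp.toLp 2 (E₁ (T₂ h), E₂ h) := fun h => rfl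
  have hβ : ∀ h, β h = WithLp.toLp 2 (E₂ (T₁ h), E₁ h) := fun h => rfl
  obtain ⟨R, hRn, hRR, hRαβ⟩ := ando_reflection α β
    (by
      intro h k
      rw [hα, hβ, WithLp.prod_inner_apply]
      simp [hE₁, hE₂, WithLp.prod_inner_apply])
    (by
      intro h
      rw [← sq_eq_sq₀ (norm_nonneg _) (norm_nonneg _), hα, hβ,
        WithLp.prod_norm_sq_eq_of_L2 (WithLp.toLp 2 (E₁ (T₂ h), E₂ h)),
        WithLp.prod_norm_sq_eq_of_L2 (WithLp.toLp 2 (E₂ (T₁ h), E₁ h))]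
      simp only [WithLp.toLp_fst, WithLp.toLp_snd, nE₁, nE₂]
      have a1 := hD₁ (T₂ h)
      have a2 := hD₂ (T₁ h)
      have a3 := hD₁ h
      have a4 := hD₂ h
      rw [hcc] at a1
      linarith)
  let W₁ := andoW T₁.toLinearMap E₁
  let W₂ := andoW T₂.toLinearMap E₂
  let P : Module.End ℂ (H × (ℕ → WithLp 2 (WithLp 2 (H × H) × WithLp 2 (H × H)))) := andoR R
  let V₁ : Module.End ℂ (H × (ℕ → WithLp 2 (WithLp 2 (H × H) × WithLp 2 (H × H)))) := P ∘ₗ W₁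
  let V₂ : Module.End ℂ (H × (ℕ → WithLp 2 (WithLp 2 (H × H) × WithLp 2 (H × H)))) := W₂ ∘ₗ P
  have hV : Commute V₁ V₂ := by
    refine LinearMap.ext fun y => ?_
    exact ando_comm T₁.toLinearMap T₂.toLinearMap E₁ E₂ R hRR hcc hRαβ y
  have hQ₁ : ∀ y, andoQ (V₁ y) = andoQ y := fun y =>
    (andoQ_R R hRn _).trans (andoQ_W _ _ (fun h => by rw [nE₁]; exact hD₁ h) y)
  have hQ₂ : ∀ y, andoQ (V₂ y) = andoQ y := fun y =>
    (andoQ_W _ _ (fun h => by rw [nE₂]; exact hD₂ h) _).trans (andoQ_R R hRn y)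
  have f₁ : ∀ (i : ℕ) y, ((V₁ ^ i) y).1 = (T₁ ^ i) y.1 := by
    intro i
    induction i with
    | zero => intro y; rfl
    | succ i ih => intro y; rw [pow_succ, Module.End.mul_apply, ih, pow_succ]; rfl
  have f₂ : ∀ (i : ℕ) y, ((V₂ ^ i) y).1 = (T₂ ^ i) y.1 := by
    intro i
    induction i with
    | zero => intro y; rfl
    | succ i ih => intro y; rw [pow_succ, Module.End.mul_apply, ih, pow_succ]; rfl
  refine ContinuousLinearMap.opNorm_le_bound _ hS0 fun h => ?_
  let d := ∑ m ∈ p.support, (m 0 + m 1)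
  have hd : ∀ m ∈ p.support, m 0 ≤ d ∧ m 1 ≤ d := by
    intro m hm
    have : m 0 + m 1 ≤ d :=
      Finset.single_le_sum (f := fun m : Fin 2 →₀ ℕ => m 0 + m 1) (fun _ _ => Nat.zero_le _) hm
    omega
  refine ando_limit _ _ d fun n hn => ?_
  have key := ando_torus V₁ V₂ hV hQ₁ hQ₂ p S hS d hd n hn (h, 0)
  have hx : andoQ ((h, 0) : H × (ℕ → WithLp 2 (WithLp 2 (H × H) × WithLp 2 (H × H))))
      = ENNReal.ofReal (‖h‖ ^ 2) := by
    simp [andoQ]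
  have hfst : (∑ m ∈ p.support, MvPolynomial.coeff m p • (V₁ ^ m 0) ((V₂ ^ m 1) (h, 0))).1
      = polyEvalPair p T₁ T₂ h := by
    rw [Prod.fst_sum, polyEvalPair, sum_apply]
    refine Finset.sum_congr rfl fun m _ => ?_
    rw [Prod.smul_fst, f₁, f₂]
    rfl
  have key2 : (n : ENNReal) ^ 2 * ENNReal.ofReal (‖polyEvalPair p T₁ T₂ h‖ ^ 2)
      ≤ ENNReal.ofReal (S ^ 2) * (((n + d : ℕ) : ENNReal) ^ 2 * ENNReal.ofReal (‖h‖ ^ 2)) := by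
    rw [← hx, ← hfst]
    refine le_trans ?_ key
    gcongr
    exact le_self_add
  rw [← ENNReal.ofReal_natCast, ← ENNReal.ofReal_natCast, ← ENNReal.ofReal_pow (by positivity),
    ← ENNReal.ofReal_pow (by positivity), ← ENNReal.ofReal_mul (by positivity),
    ← ENNReal.ofReal_mul (by positivity), ← ENNReal.ofReal_mul (by positivity),
    ENNReal.ofReal_le_ofReal_iff (by positivity)] at key2
  refine le_of_sq_le_sq ?_ (by positivity)
  linarith [key2]
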